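/- Let ρ_ABC be a positive definite density matrix on the tensor product of finite-dimensional complex Hilbert spaces H_A ⊗ H_B ⊗ H_C. Then I_max(A;B|C)_ρ = 0 if and only if ρ_ABC is a short quantum Markov chain A−C−B, and I_min(A;B|C)_ρ = 0 if and only if ρ_ABC is a short quantum Markov chain A−C−B. -/

import Mathlib

open scoped ComplexOrder Matrix

/-- Real power of a Hermitian matrix, taken on its support:
for `A = ∑ᵢ λᵢ |i⟩⟨i|`, `mpow A t = ∑_{i : λᵢ ≠ 0} λᵢ^t |i⟩⟨i|`.
(For non-Hermitian input we return the junk value `0`.) -/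
noncomputable def mpow {n : Type*} [Fintype n] [DecidableEq n]
    (A : Matrix n n ℂ) (t : ℝ) : Matrix n n ℂ :=
  if h : A.IsHermitian then
    (h.eigenvectorUnitary : Matrix n n ℂ) *
      Matrix.diagonal (fun i => ((if h.eigenvalues i = 0 then (0:ℝ)
        else (h.eigenvalues i) ^ t) : ℂ)) *
      (star h.eigenvectorUnitary : Matrix n n ℂ)
  else 0

/-- The reduced matrix `ρ_AC` of a tripartite matrix, viewed as the operator
`ρ_AC ⊗ I_B` on the full space. -/
noncomputable def redAC {dA dB dC : ℕ}
    (ρ : Matrix (Fin dA × Fin dB × Fin dC) (Fin dA × Fin dB × Fin dC) ℂ) :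
    Matrix (Fin dA × Fin dB × Fin dC) (Fin dA × Fin dB × Fin dC) ℂ :=
  fun x y => (if x.2.1 = y.2.1 then (1:ℂ) else 0) *
    ∑ m : Fin dB, ρ (x.1, m, x.2.2) (y.1, m, y.2.2)

/-- The reduced matrix `ρ_BC` of a tripartite matrix, viewed as the operator
`I_A ⊗ ρ_BC` on the full space. -/
noncomputable def redBC {dA dB dC : ℕ}
    (ρ : Matrix (Fin dA × Fin dB × Fin dC) (Fin dA × Fin dB × Fin dC) ℂ) :
    Matrix (Fin dA × Fin dB × Fin dC) (Fin dA × Fin dB × Fin dC) ℂ :=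
  fun x y => (if x.1 = y.1 then (1:ℂ) else 0) * ∑ m : Fin dA, ρ (m, x.2) (m, y.2)

/-- The reduced matrix `ρ_C` of a tripartite matrix, viewed as the operator
`I_A ⊗ I_B ⊗ ρ_C` on the full space. -/
noncomputable def redC {dA dB dC : ℕ}
    (ρ : Matrix (Fin dA × Fin dB × Fin dC) (Fin dA × Fin dB × Fin dC) ℂ) :
    Matrix (Fin dA × Fin dB × Fin dC) (Fin dA × Fin dB × Fin dC) ℂ :=
  fun x y => (if x.1 = y.1 then (1:ℂ) else 0) * (if x.2.1 = y.2.1 then (1:ℂ) else 0) *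
    ∑ m : Fin dA, ∑ l : Fin dB, ρ (m, l, x.2.2) (m, l, y.2.2)

/-- Fidelity `F(ρ,σ) = (Tr{|√ρ √σ|})²`, where `|X| = √(X†X)`. -/
noncomputable def fidelity {n : Type*} [Fintype n] [DecidableEq n]
    (ρ σ : Matrix n n ℂ) : ℝ :=
  ((mpow ((mpow ρ (1/2) * mpow σ (1/2))ᴴ * (mpow ρ (1/2) * mpow σ (1/2))) (1/2)).trace.re) ^ 2

/-- The min-relative entropy `D_min(ρ‖σ) = −log F(ρ,σ)`. -/
noncomputable def Dmin {n : Type*} [Fintype n] [DecidableEq n]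
    (ρ σ : Matrix n n ℂ) : ℝ :=
  - Real.log (fidelity ρ σ)

/-- The max-relative entropy `D_max(ρ‖σ) = inf{λ : ρ ≤ 2^λ σ}` (Loewner order). -/
noncomputable def Dmax {n : Type*} [Fintype n] [DecidableEq n]
    (ρ σ : Matrix n n ℂ) : ℝ :=
  sInf {lam : ℝ | (((2:ℝ) ^ lam) • σ - ρ).PosSemidef}

/-- The max-conditional mutual information `I_max(A;B|C)_ρ`. -/
noncomputable def Imax {dA dB dC : ℕ}
    (ρ : Matrix (Fin dA × Fin dB × Fin dC) (Fin dA × Fin dB × Fin dC) ℂ) : ℝ :=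
  Dmax ρ (mpow (redAC ρ) (1/2) * mpow (redC ρ) (-(1/2)) * redBC ρ *
    mpow (redC ρ) (-(1/2)) * mpow (redAC ρ) (1/2))

/-- The min-conditional mutual information `I_min(A;B|C)_ρ`. -/
noncomputable def Imin {dA dB dC : ℕ}
    (ρ : Matrix (Fin dA × Fin dB × Fin dC) (Fin dA × Fin dB × Fin dC) ℂ) : ℝ :=
  Dmin ρ (mpow (redAC ρ) (1/2) * mpow (redC ρ) (-(1/2)) * redBC ρ *
    mpow (redC ρ) (-(1/2)) * mpow (redAC ρ) (1/2))

/-- `ρ_ABC` is a short quantum Markov chain `A−C−B` if it is recovered by the Petz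
recovery channel acting on `C` alone:
`ρ_ABC = ρ_AC^{1/2} ρ_C^{−1/2} ρ_BC ρ_C^{−1/2} ρ_AC^{1/2}`. -/
def IsShortMarkov {dA dB dC : ℕ}
    (ρ : Matrix (Fin dA × Fin dB × Fin dC) (Fin dA × Fin dB × Fin dC) ℂ) : Prop :=
  ρ = mpow (redAC ρ) (1/2) * mpow (redC ρ) (-(1/2)) * redBC ρ *
        mpow (redC ρ) (-(1/2)) * mpow (redAC ρ) (1/2)

/-!
Let `σ` be the Petz-recovered operator and `K = ρ_C^{-1/2}`. Since `K` acts on `C` only, conjugation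
by it commutes with tracing out `A` and `B`, and `(KρK)_C = 1`; therefore
`Tr σ = Tr (ρ_AC (KρK)_BC) = Tr (ρ (KρK)_C) = Tr ρ`. Hence `ρ` and `σ` are positive definite with
the same trace, and it remains to see that `D_max` and `D_min` vanish only for equal states.
If `D_max = 0`, the infimum is attained, so `ρ ≤ σ`, and equality follows from the traces.
If `F(ρ, σ) = 1`, write `√ρ√σ = U|√ρ√σ|`; then
`‖√ρU - √σ‖₂² ≤ Tr ρ + Tr σ - 2 Tr|√ρ√σ| = 0`, so `σ = √ρUU†√ρ ≤ ρ`, and the traces give equality.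
-/

section MatrixPowers

open Matrix
open scoped MatrixOrder Kronecker

variable {m n 𝕜 : Type*} [Fintype m] [DecidableEq m] [Fintype n] [DecidableEq n] [RCLike 𝕜]

/- In `mpow`, the power `(λ : ℂ) ^ (t : ℝ)` elaborates to `CFC.rpow` on the C⋆-algebra `ℂ`. -/
lemma ofReal_cfcRpow {x : ℝ} (hx : 0 ≤ x) (t : ℝ) : (x : ℂ) ^ t = ((x ^ t : ℝ) : ℂ) :=
  CFC.rpow_algebraMap (A := ℂ) (x := ⟨x, hx⟩) (y := t)

lemma mpow_eq_rpow {A : Matrix n n ℂ} (hA : A.PosSemidef) {t : ℝ} (ht : t ≠ 0) :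
    mpow A t = A ^ t := by
  rw [mpow, dif_pos hA.1, CFC.rpow_eq_cfc_real hA.nonneg, hA.1.cfc_eq, IsHermitian.cfc,
    Unitary.conjStarAlgAut_apply]
  congr! 4 with i
  split_ifs with h
  · simp [h, Real.zero_rpow ht]
  · exact ofReal_cfcRpow (hA.eigenvalues_nonneg i) t

lemma mpow_one_half_eq_sqrt {A : Matrix n n ℂ} (hA : A.PosSemidef) :
    mpow A (1 / 2) = CFC.sqrt A := by
  rw [mpow_eq_rpow hA (by norm_num), CFC.sqrt_eq_rpow]

lemma mpow_neg_one_half_eq_sqrt_inv {A : Matrix n n ℂ} (hA : A.PosDef) :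
    mpow A (-(1 / 2)) = CFC.sqrt A⁻¹ := by
  have := hA.isStrictlyPositive
  rw [mpow_eq_rpow hA.posSemidef (by norm_num), ← CFC.inverse_rpow A _ (by norm_num),
    ← CFC.sqrt_eq_rpow, ← hA.posSemidef.inv_sqrt, nonsing_inv_eq_ringInverse]

lemma posDef_sqrt {A : Matrix n n 𝕜} (hA : A.PosDef) : (CFC.sqrt A).PosDef :=
  (hA.isStrictlyPositive.sqrt A).posDef

lemma conjTranspose_sqrt (A : Matrix n n 𝕜) : (CFC.sqrt A)ᴴ = CFC.sqrt A :=
  (CFC.sqrt_nonneg A).posSemidef.isHermitian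

lemma sqrt_inv_mul_mul_sqrt_inv {A : Matrix n n 𝕜} (hA : A.PosDef) :
    CFC.sqrt A⁻¹ * A * CFC.sqrt A⁻¹ = 1 := by
  have hdet : IsUnit (CFC.sqrt A).det := (isUnit_iff_isUnit_det _).1 (posDef_sqrt hA).isUnit
  have hsq : CFC.sqrt A * CFC.sqrt A = A := CFC.sqrt_mul_sqrt_self A hA.posSemidef.nonneg
  calc CFC.sqrt A⁻¹ * A * CFC.sqrt A⁻¹
      = (CFC.sqrt A)⁻¹ * (CFC.sqrt A * CFC.sqrt A) * (CFC.sqrt A)⁻¹ := by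
        rw [hsq, hA.posSemidef.inv_sqrt]
    _ = 1 := by rw [nonsing_inv_mul_cancel_left _ _ hdet, mul_nonsing_inv _ hdet]

lemma sqrt_kronecker {A : Matrix m m 𝕜} {B : Matrix n n 𝕜} (hA : A.PosSemidef)
    (hB : B.PosSemidef) : CFC.sqrt (A ⊗ₖ B) = CFC.sqrt A ⊗ₖ CFC.sqrt B := by
  refine CFC.sqrt_unique ?_ ?_
  · rw [← mul_kronecker_mul, CFC.sqrt_mul_sqrt_self A hA.nonneg, CFC.sqrt_mul_sqrt_self B hB.nonneg]
  · exact ((CFC.sqrt_nonneg A).posSemidef.kronecker (CFC.sqrt_nonneg B).posSemidef).nonneg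

end MatrixPowers

section TraceOrder

open Matrix
open scoped MatrixOrder

variable {n 𝕜 : Type*} [Fintype n] [RCLike 𝕜] {A B : Matrix n n 𝕜}

lemma trace_le_trace_of_le (h : A ≤ B) : A.trace ≤ B.trace := by
  simpa only [trace_sub, sub_nonneg] using (le_iff.1 h).trace_nonneg

lemma eq_of_le_of_trace_eq (h : A ≤ B) (htr : A.trace = B.trace) : A = B := by
  have hzero := (le_iff.1 h).trace_eq_zero_iff.1 (by rw [trace_sub, htr, sub_self])
  exact (sub_eq_zero.1 hzero).symm

end TraceOrder

section Fidelity

open Matrix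
open scoped MatrixOrder

variable {n 𝕜 : Type*} [Fintype n] [RCLike 𝕜]

lemma exists_isHermitian_pseudoinverse {A : Matrix n n 𝕜} (hA : A.IsHermitian) :
    ∃ S : Matrix n n 𝕜, S.IsHermitian ∧ S * A * A = A ∧ A * S * S = S := by
  classical
  have hcont (f : ℝ → ℝ) : ContinuousOn f (spectrum ℝ A) := A.finite_real_spectrum.continuousOn f
  have : IsSelfAdjoint A := hA
  refine ⟨cfc (·⁻¹ : ℝ → ℝ) A, cfc_predicate _ A, ?_, ?_⟩
  · nth_rw 2 3 4 [← cfc_id ℝ A]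
    rw [← cfc_mul _ _ A (hcont _) (hcont _), ← cfc_mul _ _ A (hcont _) (hcont _)]
    simp only [id, inv_mul_mul_self]
    rfl
  · nth_rw 1 [← cfc_id ℝ A]
    rw [← cfc_mul _ _ A (hcont _) (hcont _), ← cfc_mul _ _ A (hcont _) (hcont _)]
    congr! 2 with x
    rcases eq_or_ne x 0 with rfl | hx <;> simp [*]

variable [DecidableEq n]

/- `U` is the partial isometry of the polar decomposition `X = U |X|`. -/
lemma exists_conjTranspose_mul_eq_abs (X : Matrix n n 𝕜) :
    ∃ U : Matrix n n 𝕜, Uᴴ * X = CFC.abs X ∧ U * Uᴴ ≤ 1 := by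
  obtain ⟨S, hS, hSTT, hTSS⟩ :=
    exists_isHermitian_pseudoinverse (CFC.abs_nonneg X).posSemidef.isHermitian
  set T := CFC.abs X
  have hTT : T * T = Xᴴ * X := CFC.abs_mul_abs X
  have hU : (X * S)ᴴ = S * Xᴴ := by rw [conjTranspose_mul, hS.eq]
  refine ⟨X * S, ?_, IsStarProjection.le_one ⟨?_, .mul_star_self _⟩⟩
  · rw [hU, mul_assoc, ← hTT, ← mul_assoc, hSTT]
  · calc X * S * (X * S)ᴴ * (X * S * (X * S)ᴴ)
        = X * S * (S * (Xᴴ * X)) * S * S * Xᴴ := by rw [hU]; simp only [mul_assoc]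
      _ = X * S * (T * S * S) * Xᴴ := by rw [← hTT, ← mul_assoc S, hSTT]; simp only [mul_assoc]
      _ = X * S * (X * S)ᴴ := by rw [hTSS, hU]; simp only [mul_assoc]

lemma trace_abs_sqrt_mul_sqrt_eq_iff {ρ σ : Matrix n n 𝕜} (hρ : ρ.PosSemidef)
    (hσ : σ.PosSemidef) (htr : ρ.trace = σ.trace) :
    (CFC.abs (CFC.sqrt ρ * CFC.sqrt σ)).trace = ρ.trace ↔ ρ = σ := by
  refine ⟨fun h => ?_, ?_⟩
  swap
  · rintro rfl
    rw [CFC.sqrt_mul_sqrt_self ρ hρ.nonneg, CFC.abs_of_nonneg ρ hρ.nonneg]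
  obtain ⟨U, hUT, hUU⟩ := exists_conjTranspose_mul_eq_abs (CFC.sqrt ρ * CFC.sqrt σ)
  set P := CFC.sqrt ρ
  set Q := CFC.sqrt σ
  set T := CFC.abs (P * Q)
  have hP : Pᴴ = P := conjTranspose_sqrt ρ
  have hQ : Qᴴ = Q := conjTranspose_sqrt σ
  have hPP : P * P = ρ := CFC.sqrt_mul_sqrt_self ρ hρ.nonneg
  have hQQ : Q * Q = σ := CFC.sqrt_mul_sqrt_self σ hσ.nonneg
  have hT : Tᴴ = T := (CFC.abs_nonneg (P * Q)).posSemidef.isHermitian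
  have hTU : Q * P * U = T := by
    simpa only [conjTranspose_mul, conjTranspose_conjTranspose, hP, hQ, hT, mul_assoc]
      using congrArg conjTranspose hUT
  have hle : P * U * (P * U)ᴴ ≤ ρ := by
    simpa only [conjTranspose_mul, star_eq_conjTranspose, hP, mul_one, hPP, mul_assoc]
      using star_right_conjugate_le_conjugate hUU P
  have hexpand : (P * U - Q)ᴴ * (P * U - Q) = (P * U)ᴴ * (P * U) - T - T + σ := by
    nth_rw 1 [← hUT]
    rw [← hTU, ← hQQ, conjTranspose_sub, conjTranspose_mul, hP, hQ]
    noncomm_ring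
  have hdist : ((P * U - Q)ᴴ * (P * U - Q)).trace ≤ 0 := by
    rw [hexpand, trace_add, trace_sub, trace_sub, h, ← htr, trace_mul_comm, sub_add_cancel,
      sub_nonpos]
    exact trace_le_trace_of_le hle
  have hPU : P * U = Q := sub_eq_zero.1 <| trace_conjTranspose_mul_self_eq_zero_iff.1 <|
    hdist.antisymm (posSemidef_conjTranspose_mul_self _).trace_nonneg
  rw [hPU, hQ, hQQ] at hle
  exact (eq_of_le_of_trace_eq hle htr.symm).symm

lemma fidelity_eq_sq_trace_abs {ρ σ : Matrix n n ℂ} (hρ : ρ.PosSemidef) (hσ : σ.PosSemidef) :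
    fidelity ρ σ = (CFC.abs (CFC.sqrt ρ * CFC.sqrt σ)).trace.re ^ 2 := by
  rw [fidelity, mpow_one_half_eq_sqrt hρ, mpow_one_half_eq_sqrt hσ,
    mpow_one_half_eq_sqrt (posSemidef_conjTranspose_mul_self _), CFC.abs, star_eq_conjTranspose]

lemma fidelity_eq_one_iff {ρ σ : Matrix n n ℂ} (hρ : ρ.PosSemidef) (hσ : σ.PosSemidef)
    (hρ1 : ρ.trace = 1) (hσ1 : σ.trace = 1) : fidelity ρ σ = 1 ↔ ρ = σ := by
  have htr := (CFC.abs_nonneg (CFC.sqrt ρ * CFC.sqrt σ)).posSemidef.trace_nonneg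
  obtain ⟨hre, him⟩ := Complex.nonneg_iff.1 htr
  rw [fidelity_eq_sq_trace_abs hρ hσ, pow_eq_one_iff_of_nonneg hre two_ne_zero,
    ← trace_abs_sqrt_mul_sqrt_eq_iff hρ hσ (hρ1.trans hσ1.symm), hρ1, Complex.ext_iff]
  simp [← him]

lemma fidelity_pos [Nonempty n] {ρ σ : Matrix n n ℂ} (hρ : ρ.PosDef) (hσ : σ.PosDef) :
    0 < fidelity ρ σ := by
  have hunit : IsUnit (CFC.sqrt ρ * CFC.sqrt σ) :=
    (posDef_sqrt hρ).isUnit.mul (posDef_sqrt hσ).isUnit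
  have habs : (CFC.abs (CFC.sqrt ρ * CFC.sqrt σ)).PosDef :=
    posDef_sqrt (PosDef.conjTranspose_mul_self _ (mulVec_injective_iff_isUnit.2 hunit))
  rw [fidelity_eq_sq_trace_abs hρ.posSemidef hσ.posSemidef]
  exact pow_pos (Complex.pos_iff.1 habs.trace_pos).1 2

lemma Dmin_eq_zero_iff [Nonempty n] {ρ σ : Matrix n n ℂ} (hρ : ρ.PosDef) (hσ : σ.PosDef)
    (hρ1 : ρ.trace = 1) (hσ1 : σ.trace = 1) : Dmin ρ σ = 0 ↔ ρ = σ := by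
  have hpos := fidelity_pos hρ hσ
  rw [Dmin, neg_eq_zero, ← fidelity_eq_one_iff hρ.posSemidef hσ.posSemidef hρ1 hσ1]
  exact ⟨Real.eq_one_of_pos_of_log_eq_zero hpos, fun h => by rw [h, Real.log_one]⟩

end Fidelity

section MaxRelativeEntropy

open Matrix
open scoped MatrixOrder Matrix.Norms.L2Operator

lemma exists_pos_le_smul_of_isStrictlyPositive {A : Type*} [CStarAlgebra A] [PartialOrder A]
    [StarOrderedRing A] {a b : A} (ha : IsSelfAdjoint a) (hb : IsStrictlyPositive b) :
    ∃ t : ℝ, 0 < t ∧ a ≤ t • b := by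
  cases subsingleton_or_nontrivial A
  · exact ⟨1, one_pos, (Subsingleton.elim _ _).le⟩
  obtain ⟨r, hr, hrb⟩ : ∃ r > 0, algebraMap ℝ A r ≤ b :=
    (CFC.exists_pos_algebraMap_le_iff hb.isSelfAdjoint).2 fun _ hx => hb.spectrum_pos hx
  have ht : 0 < (‖a‖ + 1) / r := by positivity
  refine ⟨(‖a‖ + 1) / r, ht, ?_⟩
  calc a ≤ algebraMap ℝ A ‖a‖ := ha.le_algebraMap_norm_self
    _ ≤ algebraMap ℝ A (‖a‖ + 1) := algebraMap_mono A (by linarith)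
    _ = ((‖a‖ + 1) / r) • algebraMap ℝ A r := by
      rw [Algebra.algebraMap_eq_smul_one, Algebra.algebraMap_eq_smul_one, smul_smul,
        div_mul_cancel₀ _ hr.ne']
    _ ≤ ((‖a‖ + 1) / r) • b := smul_le_smul_of_nonneg_left hrb ht.le

lemma isClosed_setOf_le_two_rpow_smul {n : Type*} [Finite n] (ρ σ : Matrix n n ℂ) :
    IsClosed {lam : ℝ | ρ ≤ (2 : ℝ) ^ lam • σ} := by
  classical
  have := Fintype.ofFinite n
  have hcont : Continuous fun lam : ℝ => (2 : ℝ) ^ lam := Real.continuous_const_rpow two_ne_zero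
  exact isClosed_le continuous_const (by fun_prop)

variable {n : Type*} [Fintype n] {ρ σ : Matrix n n ℂ}

lemma one_le_of_le_smul_of_trace_eq (htr : ρ.trace = σ.trace) (hpos : 0 < ρ.trace) {c : ℝ}
    (h : ρ ≤ c • σ) : 1 ≤ c := by
  have hle : ρ.trace ≤ c • ρ.trace := by
    simpa only [trace_smul, ← htr] using trace_le_trace_of_le h
  have hre : ρ.trace.re ≤ c * ρ.trace.re := by
    simpa using (Complex.le_def.1 hle).1
  exact (le_mul_iff_one_le_left (Complex.pos_iff.1 hpos).1).1 hre

lemma Dmax_eq_zero_iff [DecidableEq n] [Nonempty n] (hρ : ρ.IsHermitian) (hσ : σ.PosDef)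
    (htr : ρ.trace = σ.trace) : Dmax ρ σ = 0 ↔ ρ = σ := by
  have hnonneg : ∀ lam ∈ {lam : ℝ | ρ ≤ (2 : ℝ) ^ lam • σ}, 0 ≤ lam := fun lam h => by
    have h1 := one_le_of_le_smul_of_trace_eq htr (htr ▸ hσ.trace_pos) h
    rwa [← Real.rpow_zero 2, Real.rpow_le_rpow_left_iff one_lt_two] at h1
  have hbdd : BddBelow {lam : ℝ | ρ ≤ (2 : ℝ) ^ lam • σ} := ⟨0, hnonneg⟩
  change sInf {lam : ℝ | ρ ≤ (2 : ℝ) ^ lam • σ} = 0 ↔ ρ = σ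
  constructor
  · intro h
    have hne : {lam : ℝ | ρ ≤ (2 : ℝ) ^ lam • σ}.Nonempty := by
      obtain ⟨t, ht, hle⟩ :=
        exists_pos_le_smul_of_isStrictlyPositive hρ.isSelfAdjoint hσ.isStrictlyPositive
      refine ⟨Real.logb 2 t, ?_⟩
      rwa [Set.mem_ofPred_eq, Real.rpow_logb two_pos (by norm_num) ht]
    have hmem := (isClosed_setOf_le_two_rpow_smul ρ σ).csInf_mem hne hbdd
    rw [h, Set.mem_ofPred_eq, Real.rpow_zero, one_smul] at hmem
    exact eq_of_le_of_trace_eq hmem htr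
  · rintro rfl
    exact le_antisymm (csInf_le hbdd (by simp)) (Real.sInf_nonneg hnonneg)

end MaxRelativeEntropy

section PartialTrace

open Matrix
open scoped Kronecker

variable {a b c R : Type*} [Fintype a]

/-- The partial trace `Tr_a τ` over the first tensor factor, for `τ` mapping between `a ⊗ c`
and `a ⊗ b`. -/
def ptraceLeft [AddCommMonoid R] (τ : Matrix (a × b) (a × c) R) : Matrix b c R :=
  ∑ i, τ.submatrix (Prod.mk i) (Prod.mk i)

lemma ptraceLeft_apply [AddCommMonoid R] (τ : Matrix (a × b) (a × c) R) (x : b) (y : c) :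
    ptraceLeft τ x y = ∑ i, τ (i, x) (i, y) := by
  simp [ptraceLeft, Matrix.sum_apply]

lemma posDef_ptraceLeft [Nonempty a] {𝕜 : Type*} [RCLike 𝕜] {τ : Matrix (a × b) (a × b) 𝕜}
    (h : τ.PosDef) : (ptraceLeft τ).PosDef :=
  posDef_sum Finset.univ_nonempty fun i _ => h.submatrix (Prod.mk_right_injective i)

lemma ptraceLeft_one_kronecker_mul_mul [Fintype b] [Fintype c] [DecidableEq a] [Semiring R]
    {d e : Type*} (S : Matrix d b R) (τ : Matrix (a × b) (a × c) R) (T : Matrix c e R) :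
    ptraceLeft (((1 : Matrix a a R) ⊗ₖ S) * τ * ((1 : Matrix a a R) ⊗ₖ T)) =
      S * ptraceLeft τ * T := by
  rw [ptraceLeft, ptraceLeft, Matrix.mul_sum, Matrix.sum_mul]
  refine Finset.sum_congr rfl fun i _ => ?_
  ext x y
  simp [mul_apply, Fintype.sum_prod_type, one_apply, ite_mul, Finset.sum_ite_eq]

lemma trace_ptraceLeft [Fintype b] [AddCommMonoid R] (τ : Matrix (a × b) (a × b) R) :
    (ptraceLeft τ).trace = τ.trace := by
  simp only [trace, diag_apply, ptraceLeft_apply, Fintype.sum_prod_type_right]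

lemma trace_one_kronecker_mul [Fintype b] [DecidableEq a] [Semiring R] (S : Matrix b b R)
    (τ : Matrix (a × b) (a × b) R) :
    (((1 : Matrix a a R) ⊗ₖ S) * τ).trace = (S * ptraceLeft τ).trace := by
  classical
  rw [← trace_ptraceLeft]
  simpa using congrArg trace (ptraceLeft_one_kronecker_mul_mul S τ 1)

end PartialTrace

section Marginals

open Matrix
open scoped MatrixOrder Kronecker

variable {dA dB dC : ℕ} (ρ : Matrix (Fin dA × Fin dB × Fin dC) (Fin dA × Fin dB × Fin dC) ℂ)

lemma redBC_eq_one_kronecker :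
    redBC ρ = (1 : Matrix (Fin dA) (Fin dA) ℂ) ⊗ₖ ptraceLeft ρ := by
  ext x y
  simp [redBC, ptraceLeft_apply, one_apply]

lemma redC_eq_one_kronecker :
    redC ρ = (1 : Matrix (Fin dA) (Fin dA) ℂ) ⊗ₖ
      ((1 : Matrix (Fin dB) (Fin dB) ℂ) ⊗ₖ ptraceLeft (ptraceLeft ρ)) := by
  ext x y
  simp only [redC, ptraceLeft_apply, one_apply, kroneckerMap_apply]
  rw [Finset.sum_comm, mul_assoc]

/-- The exchange of the first two tensor factors, as a bijection of index sets. -/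
def swapLeft (α β γ : Type*) : α × β × γ ≃ β × α × γ where
  toFun x := (x.2.1, x.1, x.2.2)
  invFun x := (x.2.1, x.1, x.2.2)
  left_inv _ := rfl
  right_inv _ := rfl

lemma redAC_eq_redBC_submatrix :
    redAC ρ = (redBC (ρ.submatrix (swapLeft _ _ _) (swapLeft _ _ _))).submatrix
      (swapLeft _ _ _) (swapLeft _ _ _) :=
  rfl

lemma redAC_redBC : redAC (redBC ρ) = redC ρ := by
  ext x y
  simp only [redAC, redBC, redC, Finset.mul_sum]
  rw [Finset.sum_comm]
  simp only [mul_left_comm, mul_assoc]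

lemma trace_redBC_mul (τ : Matrix (Fin dA × Fin dB × Fin dC) (Fin dA × Fin dB × Fin dC) ℂ) :
    (redBC ρ * τ).trace = (ρ * redBC τ).trace := by
  rw [trace_mul_comm ρ, redBC_eq_one_kronecker, redBC_eq_one_kronecker, trace_one_kronecker_mul,
    trace_one_kronecker_mul, trace_mul_comm]

lemma trace_redAC_mul (τ : Matrix (Fin dA × Fin dB × Fin dC) (Fin dA × Fin dB × Fin dC) ℂ) :
    (redAC ρ * τ).trace = (ρ * redAC τ).trace := by
  let e := swapLeft (Fin dB) (Fin dA) (Fin dC)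
  have htrace (M N : Matrix (Fin dA × Fin dB × Fin dC) (Fin dA × Fin dB × Fin dC) ℂ) :
      (M * N).trace = (M.submatrix e e * N.submatrix e e).trace := by
    rw [submatrix_mul_equiv]
    exact (e.sum_comp fun x => (M * N) x x).symm
  rw [htrace, htrace]
  exact trace_redBC_mul (ρ.submatrix e e) (τ.submatrix e e)

variable {ρ}

lemma posDef_redBC [Nonempty (Fin dA)] (hρ : ρ.PosDef) : (redBC ρ).PosDef := by
  rw [redBC_eq_one_kronecker]
  exact PosDef.one.kronecker (posDef_ptraceLeft hρ)

lemma posDef_redAC [Nonempty (Fin dB)] (hρ : ρ.PosDef) : (redAC ρ).PosDef := by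
  rw [redAC_eq_redBC_submatrix]
  exact (posDef_redBC (hρ.submatrix (Equiv.injective _))).submatrix (Equiv.injective _)

lemma posDef_redC [Nonempty (Fin dA)] [Nonempty (Fin dB)] (hρ : ρ.PosDef) : (redC ρ).PosDef := by
  rw [← redAC_redBC]
  exact posDef_redAC (posDef_redBC hρ)

lemma redBC_one_kronecker_conj (S : Matrix (Fin dB × Fin dC) (Fin dB × Fin dC) ℂ) :
    redBC ((1 ⊗ₖ S) * ρ * (1 ⊗ₖ S)) = (1 ⊗ₖ S) * redBC ρ * (1 ⊗ₖ S) := by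
  simp only [redBC_eq_one_kronecker, ptraceLeft_one_kronecker_mul_mul, ← mul_kronecker_mul, mul_one]

lemma redC_one_kronecker_conj (S : Matrix (Fin dC) (Fin dC) ℂ) :
    redC ((1 ⊗ₖ (1 ⊗ₖ S)) * ρ * (1 ⊗ₖ (1 ⊗ₖ S))) =
      (1 ⊗ₖ (1 ⊗ₖ S)) * redC ρ * (1 ⊗ₖ (1 ⊗ₖ S)) := by
  simp only [redC_eq_one_kronecker, ptraceLeft_one_kronecker_mul_mul, ← mul_kronecker_mul, mul_one]

lemma sqrt_inv_redC [Nonempty (Fin dA)] [Nonempty (Fin dB)] (hρ : ρ.PosDef) :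
    CFC.sqrt (redC ρ)⁻¹ = 1 ⊗ₖ (1 ⊗ₖ CFC.sqrt (ptraceLeft (ptraceLeft ρ))⁻¹) := by
  have hC : (ptraceLeft (ptraceLeft ρ))⁻¹.PosSemidef :=
    (posDef_ptraceLeft (posDef_ptraceLeft hρ)).inv.posSemidef
  rw [redC_eq_one_kronecker, inv_kronecker, inv_kronecker, inv_one, inv_one,
    sqrt_kronecker PosSemidef.one (PosSemidef.one.kronecker hC), sqrt_kronecker PosSemidef.one hC,
    CFC.sqrt_one, CFC.sqrt_one]

end Marginals

section PetzRecovery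

open Matrix
open scoped MatrixOrder Kronecker

variable {dA dB dC : ℕ} {ρ : Matrix (Fin dA × Fin dB × Fin dC) (Fin dA × Fin dB × Fin dC) ℂ}

/-- The state recovered from `ρ_BC` by the Petz recovery map acting on `C`. -/
noncomputable def petzRecovered
    (ρ : Matrix (Fin dA × Fin dB × Fin dC) (Fin dA × Fin dB × Fin dC) ℂ) :
    Matrix (Fin dA × Fin dB × Fin dC) (Fin dA × Fin dB × Fin dC) ℂ :=
  mpow (redAC ρ) (1/2) * mpow (redC ρ) (-(1/2)) * redBC ρ *
    mpow (redC ρ) (-(1/2)) * mpow (redAC ρ) (1/2)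

variable [Nonempty (Fin dA)] [Nonempty (Fin dB)]

lemma petzRecovered_eq_sqrt (hρ : ρ.PosDef) :
    petzRecovered ρ = CFC.sqrt (redAC ρ) * CFC.sqrt (redC ρ)⁻¹ * redBC ρ *
      CFC.sqrt (redC ρ)⁻¹ * CFC.sqrt (redAC ρ) := by
  rw [petzRecovered, mpow_one_half_eq_sqrt (posDef_redAC hρ).posSemidef,
    mpow_neg_one_half_eq_sqrt_inv (posDef_redC hρ)]

lemma posDef_petzRecovered (hρ : ρ.PosDef) : (petzRecovered ρ).PosDef := by
  have hunit : IsUnit (CFC.sqrt (redC ρ)⁻¹ * CFC.sqrt (redAC ρ)) :=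
    (posDef_sqrt (posDef_redC hρ).inv).isUnit.mul (posDef_sqrt (posDef_redAC hρ)).isUnit
  have hconj := (posDef_redBC hρ).conjTranspose_mul_mul_same (mulVec_injective_iff_isUnit.2 hunit)
  rw [petzRecovered_eq_sqrt hρ]
  simpa only [conjTranspose_mul, conjTranspose_sqrt, mul_assoc] using hconj

lemma trace_petzRecovered (hρ : ρ.PosDef) : (petzRecovered ρ).trace = ρ.trace := by
  set S := CFC.sqrt (redAC ρ)
  set K := CFC.sqrt (redC ρ)⁻¹ with hK
  have hSS : S * S = redAC ρ := CFC.sqrt_mul_sqrt_self _ (posDef_redAC hρ).posSemidef.nonneg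
  have hBC : K * redBC ρ * K = redBC (K * ρ * K) := by
    rw [hK, sqrt_inv_redC hρ, redBC_one_kronecker_conj]
  have hC : redC (K * ρ * K) = 1 := by
    rw [← sqrt_inv_mul_mul_sqrt_inv (posDef_redC hρ), sqrt_inv_redC hρ,
      ← redC_one_kronecker_conj, hK, sqrt_inv_redC hρ]
  calc (petzRecovered ρ).trace = (S * S * (K * redBC ρ * K)).trace := by
        rw [petzRecovered_eq_sqrt hρ, trace_mul_comm]; simp only [mul_assoc]; rfl
    _ = (redAC ρ * redBC (K * ρ * K)).trace := by rw [hSS, hBC]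
    _ = (ρ * redC (K * ρ * K)).trace := by rw [trace_redAC_mul, redAC_redBC]
    _ = ρ.trace := by rw [hC, mul_one]

end PetzRecovery

theorem stmt_18 {dA dB dC : ℕ}
    (ρ : Matrix (Fin dA × Fin dB × Fin dC) (Fin dA × Fin dB × Fin dC) ℂ)
    (hρ : ρ.PosDef) (hρ1 : ρ.trace = 1) :
    (Imax ρ = 0 ↔ IsShortMarkov ρ) ∧ (Imin ρ = 0 ↔ IsShortMarkov ρ) := by
  have hne : Nonempty (Fin dA × Fin dB × Fin dC) := by
    by_contra hempty
    rw [not_nonempty_iff] at hempty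
    simp [Matrix.trace] at hρ1
  obtain ⟨hA, hBC⟩ := nonempty_prod.1 hne
  obtain ⟨hB, -⟩ := nonempty_prod.1 hBC
  have hσ := posDef_petzRecovered hρ
  have htr := trace_petzRecovered hρ
  exact ⟨Dmax_eq_zero_iff hρ.isHermitian hσ htr.symm,
    Dmin_eq_zero_iff hρ hσ hρ1 (htr.trans hρ1)⟩
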